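/- arXiv:0807.3980 — 3 statements merged into one kernel-verified Lean document; each statement's English description precedes it below -/
import Mathlib

section
/- Let Γ be a torsion-free discrete subgroup of SL₂(ℝ)×SL₂(ℝ). Then Γ acts properly discontinuously on SL₂(ℝ) by (γ₁,γ₂)·g = γ₁gγ₂⁻¹ if and only if, possibly after composing the inclusion of Γ with the swap automorphism (γ₁,γ₂) ↦ (γ₂,γ₁) of SL₂(ℝ)×SL₂(ℝ), there exist a discrete subgroup Γ₀ of SL₂(ℝ) and a group homomorphism φ : Γ₀ → SL₂(ℝ) such that Γ = {(γ, φ(γ)) : γ ∈ Γ₀} and, for every real C > 0, all but finitely many γ ∈ Γ₀ satisfy C·‖φ(γ)‖ < ‖γ‖. -/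
/-!
STATEMENT 0: torsion-free discrete subgroups of SL₂(ℝ)×SL₂(ℝ) act properly
discontinuously on SL₂(ℝ) (by (γ₁,γ₂)·g = γ₁gγ₂⁻¹) iff, up to swapping the two
factors, they are graphs of the stated form.
-/

open Matrix

/-- `SL₂(ℝ)`. -/
abbrev SL2R := Matrix.SpecialLinearGroup (Fin 2) ℝ

/-- The topology on SL₂(ℝ) as a subset of the 2×2 real matrices. -/
instance : TopologicalSpace SL2R :=
  TopologicalSpace.induced (fun g => (g : Matrix (Fin 2) (Fin 2) ℝ)) inferInstance

/-- The operator norm of `g ∈ SL₂(ℝ)` acting on Euclidean ℝ². -/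
noncomputable def sl2OpNorm (g : SL2R) : ℝ :=
  ‖Matrix.toEuclideanCLM (𝕜 := ℝ) (g : Matrix (Fin 2) (Fin 2) ℝ)‖

/-!
The Cartan projection `μ g = log ‖g‖` is a proper, inversion-invariant, subadditive function on
`SL₂(ℝ)`. By the Cartan decomposition, `|μ a - μ b|` is the minimum of `μ (a k b⁻¹)` over rotations
`k`, so `Γ` acts properly discontinuously if and only if `|μ γ₁ - μ γ₂| → ∞` on `Γ`.

It remains to see that `f γ = μ γ₁ - μ γ₂` then has a constant sign outside a finite set. Let `d`
have infinite order. Since `f` changes by a bounded amount when its argument is multiplied by `d`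
and `|f| → ∞`, the sign of `f (d ^ n)` is eventually constant, say positive. As `f γ⁻¹ = f γ` and
`f` is almost invariant under left translations as well, `f` tends to `+∞` along both ends of each
line `{g d ^ n | n ∈ ℤ}`, so a line on which `f` is somewhere nonpositive passes through the finite
set where `|f|` is bounded by the step size. There are finitely many such lines, each with finitely
many nonpositive values.

Once `f → +∞`, also `μ γ₁ → ∞`, so the first projection has finite, hence trivial, kernel and
discrete image, and `Γ` is the graph of a homomorphism.
-/

open Filter Set

theorem tendsto_atTop_or_atBot_of_tendsto_abs {a : ℕ → ℝ} {B : ℝ}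
    (hstep : ∀ n, |a (n + 1) - a n| ≤ B) (habs : Tendsto (fun n => |a n|) atTop atTop) :
    Tendsto a atTop atTop ∨ Tendsto a atTop atBot := by
  obtain ⟨N, hN⟩ := eventually_atTop.1 (habs.eventually_gt_atTop B)
  wlog h₀ : 0 ≤ a N generalizing a
  · have hneg_step (n : ℕ) : |-a (n + 1) - -a n| ≤ B := by
      simpa [abs_sub_comm, neg_add_eq_sub] using hstep n
    simpa [or_comm] using this (a := fun n => -a n) hneg_step (by simpa using habs)
      (by simpa using hN) (by linarith)
  have hpos : ∀ n ≥ N, 0 ≤ a n := by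
    intro n hn
    induction n, hn using Nat.le_induction with
    | base => exact h₀
    | succ n hn ih =>
      have hlarge : B < a n := abs_of_nonneg ih ▸ hN n hn
      linarith [(abs_le.1 (hstep n)).1]
  exact .inl <| habs.congr' <| (eventually_ge_atTop N).mono fun n hn => abs_of_nonneg (hpos n hn)

section GroupSeminorm

variable {G : Type*} [Group G] (p q : GroupSeminorm G)

theorem abs_map_mul_left_sub_le (s g : G) : |p (s * g) - p g| ≤ p s := by
  simpa using abs_sub_map_le_div p (s * g) g

theorem abs_map_mul_right_sub_le (g s : G) : |p (g * s) - p g| ≤ p s := by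
  simpa [← map_inv_eq_map p (g * s)] using abs_map_mul_left_sub_le p s⁻¹ g⁻¹

theorem abs_sub_map_mul_left_sub_le (s g : G) :
    |(p (s * g) - q (s * g)) - (p g - q g)| ≤ p s + q s := by
  rw [sub_sub_sub_comm]
  exact (abs_sub _ _).trans
    (add_le_add (abs_map_mul_left_sub_le p s g) (abs_map_mul_left_sub_le q s g))

theorem abs_sub_map_mul_right_sub_le (g s : G) :
    |(p (g * s) - q (g * s)) - (p g - q g)| ≤ p s + q s := by
  rw [sub_sub_sub_comm]
  exact (abs_sub _ _).trans
    (add_le_add (abs_map_mul_right_sub_le p g s) (abs_map_mul_right_sub_le q g s))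

variable {p q}

theorem tendsto_sub_map_mul_left_atTop {ι : Type*} {l : Filter ι} {u : ι → G}
    (hu : Tendsto (fun i => p (u i) - q (u i)) l atTop) (s : G) :
    Tendsto (fun i => p (s * u i) - q (s * u i)) l atTop := by
  refine tendsto_atTop_mono (fun i => ?_) (tendsto_atTop_add_const_right l (-(p s + q s)) hu)
  linarith [(abs_le.1 (abs_sub_map_mul_left_sub_le p q s (u i))).1]

theorem tendsto_sub_cofinite_atTop_of_pow
    (habs : Tendsto (fun g => |p g - q g|) cofinite atTop) {d : G}
    (hd : Tendsto (fun n : ℕ => p (d ^ n) - q (d ^ n)) atTop atTop) :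
    Tendsto (fun g => p g - q g) cofinite atTop := by
  have hd_inv : Tendsto (fun n : ℕ => p (d ^ n)⁻¹ - q (d ^ n)⁻¹) atTop atTop := by
    simpa only [map_inv_eq_map] using hd
  have hwindow : {h | |p h - q h| ≤ p d + q d}.Finite := by
    simpa using eventually_cofinite.1 (habs.eventually_gt_atTop (p d + q d))
  have hray (h : G) : {n : ℕ | p (h * (d ^ n)⁻¹) - q (h * (d ^ n)⁻¹) ≤ 0}.Finite := by
    have := (tendsto_sub_map_mul_left_atTop hd_inv h).eventually_gt_atTop 0
    simpa only [← Nat.cofinite_eq_atTop, eventually_cofinite, not_lt] using this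
  have hnonpos : {g | p g - q g ≤ 0}.Finite := by
    refine (hwindow.biUnion fun h _ => (hray h).image fun n => h * (d ^ n)⁻¹).subset fun g hg => ?_
    obtain ⟨n, hn, hn'⟩ : ∃ n, ¬ 0 < p (g * d ^ n) - q (g * d ^ n) ∧
        0 < p (g * d ^ (n + 1)) - q (g * d ^ (n + 1)) :=
      Nat.exists_not_and_succ_of_not_zero_of_exists (by simpa using hg)
        ((tendsto_sub_map_mul_left_atTop hd g).eventually_gt_atTop 0).exists
    rw [pow_succ, ← mul_assoc] at hn'
    have hmem : |p (g * d ^ n) - q (g * d ^ n)| ≤ p d + q d := by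
      refine abs_le.2 ⟨?_, ?_⟩
      · linarith [(abs_le.1 (abs_sub_map_mul_right_sub_le p q (g * d ^ n) d)).2]
      · linarith [apply_nonneg p d, apply_nonneg q d]
    exact mem_biUnion (x := g * d ^ n) hmem ⟨n, by simpa using hg, by simp⟩
  refine habs.congr' <| eventually_cofinite.2 <| hnonpos.subset fun g hg => ?_
  exact not_lt.1 fun hpos => hg (abs_of_pos hpos)

theorem tendsto_sub_cofinite_atTop_or
    (habs : Tendsto (fun g => |p g - q g|) cofinite atTop) {d : G} (hd : ¬ IsOfFinOrder d) :
    Tendsto (fun g => p g - q g) cofinite atTop ∨ Tendsto (fun g => q g - p g) cofinite atTop := by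
  have hpow : Tendsto (fun n : ℕ => d ^ n) atTop cofinite :=
    Nat.cofinite_eq_atTop ▸ (injective_pow_iff_not_isOfFinOrder.2 hd).tendsto_cofinite
  have hstep (n : ℕ) :
      |(p (d ^ (n + 1)) - q (d ^ (n + 1))) - (p (d ^ n) - q (d ^ n))| ≤ p d + q d :=
    pow_succ d n ▸ abs_sub_map_mul_right_sub_le p q (d ^ n) d
  refine (tendsto_atTop_or_atBot_of_tendsto_abs hstep (habs.comp hpow)).imp
    (tendsto_sub_cofinite_atTop_of_pow habs) fun hd_bot => ?_
  refine tendsto_sub_cofinite_atTop_of_pow (by simpa only [abs_sub_comm] using habs) (d := d) ?_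
  simpa only [Function.comp_def, neg_sub] using tendsto_neg_atBot_atTop.comp hd_bot

end GroupSeminorm

theorem discreteTopology_of_tendsto_cofinite_atTop {X : Type*} [TopologicalSpace X] [T1Space X]
    {f : X → ℝ} (hf : Continuous f) (hf_top : Tendsto f cofinite atTop) : DiscreteTopology X := by
  refine discreteTopology_iff_isOpen_singleton.2 fun x =>
    isOpen_singleton_of_finite_mem_nhds x
      (hf.continuousAt.eventually_lt_const (lt_add_one (f x))) ?_
  simpa using eventually_cofinite.1 (hf_top.eventually_ge_atTop (f x + 1))

theorem injective_of_tendsto_comp_cofinite_atTop {G H : Type*} [Group G] [Group H] {ρ : G →* H}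
    (htf : ∀ g : G, IsOfFinOrder g → g = 1) {f : H → ℝ}
    (hf : Tendsto (fun g => f (ρ g)) cofinite atTop) : Function.Injective ρ := by
  refine (injective_iff_map_eq_one ρ).2 fun g hg => htf g ?_
  have hker : (ρ.ker : Set G).Finite :=
    (eventually_cofinite.1 (hf.eventually_gt_atTop (f 1))).subset fun k hk => by
      simp [MonoidHom.mem_ker.1 hk]
  have : Finite ρ.ker := hker
  exact Submonoid.isOfFinOrder_coe.2 (isOfFinOrder_of_finite (⟨g, hg⟩ : ρ.ker))

open scoped Matrix.Norms.L2Operator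

namespace SL2R

/-- The rotation of the Euclidean plane by the angle `θ`; these matrices make up `SO(2)`. -/
noncomputable def rotation (θ : ℝ) : SL2R :=
  ⟨!![Real.cos θ, -Real.sin θ; Real.sin θ, Real.cos θ], by
    simp [Matrix.det_fin_two, ← sq]⟩

/-- The diagonal matrix with entries `exp t` and `exp (-t)`; those with `0 ≤ t` make up the
positive Weyl chamber `A⁺` of the Cartan decomposition. -/
noncomputable def diagExp (t : ℝ) : SL2R :=
  ⟨Matrix.diagonal ![Real.exp t, Real.exp (-t)], by simp [← Real.exp_add]⟩

@[simp]
theorem coe_rotation (θ : ℝ) : (rotation θ : Matrix (Fin 2) (Fin 2) ℝ) =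
    !![Real.cos θ, -Real.sin θ; Real.sin θ, Real.cos θ] := rfl

@[simp]
theorem coe_diagExp (t : ℝ) : (diagExp t : Matrix (Fin 2) (Fin 2) ℝ) =
    Matrix.diagonal ![Real.exp t, Real.exp (-t)] := rfl

theorem inv_rotation (θ : ℝ) : (rotation θ)⁻¹ = rotation (-θ) := by
  ext i j
  fin_cases i <;> fin_cases j <;> simp [Matrix.adjugate_fin_two]

theorem coe_rotation_mem_unitaryGroup (θ : ℝ) :
    (rotation θ : Matrix (Fin 2) (Fin 2) ℝ) ∈ Matrix.unitaryGroup (Fin 2) ℝ := by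
  rw [Matrix.mem_unitaryGroup_iff]
  ext i j
  fin_cases i <;> fin_cases j <;>
    simp [Matrix.mul_apply, Fin.sum_univ_two, ← sq, mul_comm]

theorem diagExp_mul_diagExp (s t : ℝ) : diagExp s * diagExp t = diagExp (s + t) := by
  ext i j
  fin_cases i <;> fin_cases j <;> simp [Real.exp_add, add_comm]

theorem inv_diagExp (t : ℝ) : (diagExp t)⁻¹ = diagExp (-t) := by
  ext i j
  fin_cases i <;> fin_cases j <;>
    simp [Matrix.adjugate_fin_two, -Matrix.adjugate_diagonal]

theorem sl2OpNorm_diagExp (t : ℝ) : sl2OpNorm (diagExp t) = Real.exp |t| := by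
  have hnorm : ‖![Real.exp t, Real.exp (-t)]‖ = max (Real.exp t) (Real.exp (-t)) := by
    simp [Pi.norm_def, Fin.univ_succ]
  rw [abs_eq_max_neg, Real.exp_monotone.map_max, ← hnorm]
  exact Matrix.l2_opNorm_diagonal _

theorem sl2OpNorm_mul_le (g h : SL2R) : sl2OpNorm (g * h) ≤ sl2OpNorm g * sl2OpNorm h :=
  norm_mul_le (g : Matrix (Fin 2) (Fin 2) ℝ) h

theorem sl2OpNorm_rotation_mul_mul_rotation (θ ψ : ℝ) (g : SL2R) :
    sl2OpNorm (rotation θ * g * rotation ψ) = sl2OpNorm g :=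
  (CStarRing.norm_mul_mem_unitary _ (coe_rotation_mem_unitaryGroup ψ)).trans
    (CStarRing.norm_mem_unitary_mul _ (coe_rotation_mem_unitaryGroup θ))

theorem coe_rotation_mul_diagExp_mul_rotation (θ t ψ : ℝ) :
    ((rotation θ * diagExp t * rotation ψ : SL2R) : Matrix (Fin 2) (Fin 2) ℝ) =
      !![Real.exp t * (Real.cos θ * Real.cos ψ) - Real.exp (-t) * (Real.sin θ * Real.sin ψ),
        -Real.exp t * (Real.cos θ * Real.sin ψ) - Real.exp (-t) * (Real.sin θ * Real.cos ψ);
        Real.exp t * (Real.sin θ * Real.cos ψ) + Real.exp (-t) * (Real.cos θ * Real.sin ψ),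
        -Real.exp t * (Real.sin θ * Real.sin ψ) + Real.exp (-t) * (Real.cos θ * Real.cos ψ)] := by
  simp only [Matrix.SpecialLinearGroup.coe_mul, coe_rotation, coe_diagExp,
    Matrix.diagonal_vec2, Matrix.mul_fin_two]
  congrm !![?_, ?_; ?_, ?_] <;> ring

theorem exists_eq_rotation_mul_diagExp_mul_rotation (g : SL2R) :
    ∃ θ ψ t : ℝ, 0 ≤ t ∧ g = rotation θ * diagExp t * rotation ψ := by
  -- On `ℂ = ℝ²` the matrix `g` acts as `z ↦ α * z + β * conj z`. It has singular values
  -- `‖α‖ + ‖β‖` and `‖α‖ - ‖β‖`, attained where `arg (α * z)` and `arg (β * conj z)` agree or are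
  -- opposite.
  let α : ℂ := ⟨(g 0 0 + g 1 1) / 2, (g 1 0 - g 0 1) / 2⟩
  let β : ℂ := ⟨(g 0 0 - g 1 1) / 2, (g 1 0 + g 0 1) / 2⟩
  have hdet : g 0 0 * g 1 1 - g 0 1 * g 1 0 = 1 := by
    rw [← Matrix.det_fin_two, g.det_coe]
  have hαβ : (‖α‖ + ‖β‖) * (‖α‖ - ‖β‖) = 1 := by
    rw [← sq_sub_sq, Complex.sq_norm, Complex.sq_norm, Complex.normSq_apply, Complex.normSq_apply]
    linear_combination hdet
  have h_one_le : 1 ≤ ‖α‖ + ‖β‖ := by nlinarith [norm_nonneg α, norm_nonneg β]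
  have hexp : Real.exp (Real.log (‖α‖ + ‖β‖)) = ‖α‖ + ‖β‖ := Real.exp_log (by linarith)
  have hexp_neg : Real.exp (-Real.log (‖α‖ + ‖β‖)) = ‖α‖ - ‖β‖ := by
    rw [Real.exp_neg, hexp, inv_eq_of_mul_eq_one_right hαβ]
  obtain ⟨θ, ψ, hα, hβ⟩ : ∃ θ ψ : ℝ, α.arg = θ + ψ ∧ β.arg = θ - ψ :=
    ⟨(α.arg + β.arg) / 2, (α.arg - β.arg) / 2, by ring, by ring⟩
  have hα_re : ‖α‖ * Real.cos (θ + ψ) = (g 0 0 + g 1 1) / 2 := hα ▸ α.norm_mul_cos_arg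
  have hα_im : ‖α‖ * Real.sin (θ + ψ) = (g 1 0 - g 0 1) / 2 := hα ▸ α.norm_mul_sin_arg
  have hβ_re : ‖β‖ * Real.cos (θ - ψ) = (g 0 0 - g 1 1) / 2 := hβ ▸ β.norm_mul_cos_arg
  have hβ_im : ‖β‖ * Real.sin (θ - ψ) = (g 1 0 + g 0 1) / 2 := hβ ▸ β.norm_mul_sin_arg
  rw [Real.cos_add] at hα_re
  rw [Real.sin_add] at hα_im
  rw [Real.cos_sub] at hβ_re
  rw [Real.sin_sub] at hβ_im
  refine ⟨θ, ψ, Real.log (‖α‖ + ‖β‖), Real.log_nonneg h_one_le, ?_⟩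
  refine Subtype.ext ((Matrix.eta_fin_two _).trans ?_)
  rw [coe_rotation_mul_diagExp_mul_rotation, hexp, hexp_neg]
  congrm !![?_, ?_; ?_, ?_]
  · linear_combination -hα_re - hβ_re
  · linear_combination hα_im - hβ_im
  · linear_combination -hα_im - hβ_im
  · linear_combination -hα_re + hβ_re

theorem one_le_sl2OpNorm (g : SL2R) : 1 ≤ sl2OpNorm g := by
  obtain ⟨θ, ψ, t, -, rfl⟩ := exists_eq_rotation_mul_diagExp_mul_rotation g
  rw [sl2OpNorm_rotation_mul_mul_rotation, sl2OpNorm_diagExp]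
  exact Real.one_le_exp (abs_nonneg t)

theorem sl2OpNorm_pos (g : SL2R) : 0 < sl2OpNorm g :=
  one_pos.trans_le (one_le_sl2OpNorm g)

theorem sl2OpNorm_inv (g : SL2R) : sl2OpNorm g⁻¹ = sl2OpNorm g := by
  obtain ⟨θ, ψ, t, -, rfl⟩ := exists_eq_rotation_mul_diagExp_mul_rotation g
  rw [_root_.mul_inv_rev, _root_.mul_inv_rev, ← mul_assoc]
  simp only [inv_rotation, inv_diagExp, sl2OpNorm_rotation_mul_mul_rotation, sl2OpNorm_diagExp,
    abs_neg]

/-- The Cartan projection `SL₂(ℝ) → [0, ∞)`, `g ↦ log ‖g‖`, bundled as a group seminorm. -/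
noncomputable def cartanProj : GroupSeminorm SL2R where
  toFun g := Real.log (sl2OpNorm g)
  map_one' := by
    have hnorm : sl2OpNorm 1 = 1 := norm_one (α := Matrix (Fin 2) (Fin 2) ℝ)
    rw [hnorm, Real.log_one]
  mul_le' g h := by
    rw [← Real.log_mul (sl2OpNorm_pos g).ne' (sl2OpNorm_pos h).ne']
    exact Real.log_le_log (sl2OpNorm_pos _) (sl2OpNorm_mul_le g h)
  inv' g := by rw [sl2OpNorm_inv]

theorem cartanProj_eq_log (g : SL2R) : cartanProj g = Real.log (sl2OpNorm g) := rfl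

theorem exp_cartanProj (g : SL2R) : Real.exp (cartanProj g) = sl2OpNorm g :=
  Real.exp_log (sl2OpNorm_pos g)

theorem cartanProj_rotation_mul_mul_rotation (θ ψ : ℝ) (g : SL2R) :
    cartanProj (rotation θ * g * rotation ψ) = cartanProj g :=
  congrArg Real.log (sl2OpNorm_rotation_mul_mul_rotation θ ψ g)

theorem cartanProj_diagExp (t : ℝ) : cartanProj (diagExp t) = |t| := by
  rw [cartanProj_eq_log, sl2OpNorm_diagExp, Real.log_exp]

theorem exists_eq_rotation_mul_diagExp_cartanProj_mul_rotation (g : SL2R) :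
    ∃ θ ψ : ℝ, g = rotation θ * diagExp (cartanProj g) * rotation ψ := by
  obtain ⟨θ, ψ, t, ht, rfl⟩ := exists_eq_rotation_mul_diagExp_mul_rotation g
  refine ⟨θ, ψ, ?_⟩
  rw [cartanProj_rotation_mul_mul_rotation, cartanProj_diagExp, abs_of_nonneg ht]

theorem exists_cartanProj_mul_mul_inv_eq (a b : SL2R) :
    ∃ k : SL2R, cartanProj k = 0 ∧ cartanProj (a * k * b⁻¹) = |cartanProj a - cartanProj b| := by
  obtain ⟨θ, ψ, ha⟩ := exists_eq_rotation_mul_diagExp_cartanProj_mul_rotation a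
  obtain ⟨θ', ψ', hb⟩ := exists_eq_rotation_mul_diagExp_cartanProj_mul_rotation b
  refine ⟨rotation (-ψ) * 1 * rotation ψ', ?_, ?_⟩
  · rw [cartanProj_rotation_mul_mul_rotation, map_one_eq_zero]
  · have hprod : a * (rotation (-ψ) * 1 * rotation ψ') * b⁻¹ =
        rotation θ * diagExp (cartanProj a - cartanProj b) * rotation (-θ') := by
      conv_lhs => rw [ha, hb]
      rw [sub_eq_add_neg, ← diagExp_mul_diagExp, ← inv_diagExp, ← inv_rotation, ← inv_rotation]
      group
    rw [hprod, cartanProj_rotation_mul_mul_rotation, cartanProj_diagExp]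

/-- The topology on `SL2R` declared above unfolds to Mathlib's one on `SpecialLinearGroup`. -/
theorem isClosedEmbedding_coe :
    Topology.IsClosedEmbedding fun g : SL2R => (g : Matrix (Fin 2) (Fin 2) ℝ) :=
  Matrix.SpecialLinearGroup.isClosedEmbedding_val

theorem continuous_cartanProj : Continuous cartanProj :=
  isClosedEmbedding_coe.continuous.norm.log fun g => (sl2OpNorm_pos g).ne'

theorem isCompact_setOf_cartanProj_le (R : ℝ) : IsCompact {g | cartanProj g ≤ R} := by
  have : ProperSpace (Matrix (Fin 2) (Fin 2) ℝ) := FiniteDimensional.proper ℝ _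
  convert isClosedEmbedding_coe.isCompact_preimage
    (isCompact_closedBall (0 : Matrix (Fin 2) (Fin 2) ℝ) (Real.exp R)) using 1
  ext g
  rw [mem_preimage, mem_closedBall_zero_iff, mem_ofPred_eq, ← Real.exp_le_exp, exp_cartanProj]
  rfl

theorem forall_isCompact_finite_iff_tendsto_abs_cartanProj_sub {ι : Type*} (a b : ι → SL2R) :
    (∀ K L : Set SL2R, IsCompact K → IsCompact L →
      {i | ((fun g => a i * g * (b i)⁻¹) '' K ∩ L).Nonempty}.Finite) ↔
    Tendsto (fun i => |cartanProj (a i) - cartanProj (b i)|) cofinite atTop := by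
  simp only [atTop_basis_Ioi.tendsto_right_iff, eventually_cofinite, mem_Ioi, not_lt, true_imp_iff]
  constructor
  · intro h R
    refine (h _ _ (isCompact_setOf_cartanProj_le 0) (isCompact_setOf_cartanProj_le R)).subset
      fun i hi => ?_
    obtain ⟨k, hk, hab⟩ := exists_cartanProj_mul_mul_inv_eq (a i) (b i)
    exact ⟨_, ⟨k, hk.le, rfl⟩, hab.trans_le hi⟩
  · intro h K L hK hL
    obtain ⟨B, hB⟩ := hK.bddAbove_image continuous_cartanProj.continuousOn
    obtain ⟨C, hC⟩ := hL.bddAbove_image continuous_cartanProj.continuousOn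
    refine (h (B + C)).subset ?_
    rintro i ⟨_, ⟨g, hg, rfl⟩, hgL⟩
    have ha : |cartanProj (a i) - cartanProj (a i * g)| ≤ B :=
      (abs_sub_comm _ _).trans_le <| (abs_map_mul_right_sub_le _ _ _).trans <|
        hB (mem_image_of_mem _ hg)
    have hb : |cartanProj (a i * g) - cartanProj (b i)| ≤ C := by
      simpa only [inv_mul_cancel_right] using
        (abs_map_mul_left_sub_le _ (a i * g * (b i)⁻¹) (b i)).trans (hC (mem_image_of_mem _ hgL))
    exact (abs_sub_le _ _ _).trans (add_le_add ha hb)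

theorem tendsto_cartanProj_sub_atTop_iff {ι : Type*} (a b : ι → SL2R) :
    Tendsto (fun i => cartanProj (a i) - cartanProj (b i)) cofinite atTop ↔
      ∀ C : ℝ, 0 < C → {i | ¬ C * sl2OpNorm (b i) < sl2OpNorm (a i)}.Finite := by
  have hexp (R : ℝ) (i : ι) : R < cartanProj (a i) - cartanProj (b i) ↔
      Real.exp R * sl2OpNorm (b i) < sl2OpNorm (a i) := by
    rw [lt_sub_iff_add_lt, ← Real.exp_lt_exp, Real.exp_add, exp_cartanProj, exp_cartanProj]
  simp only [atTop_basis_Ioi.tendsto_right_iff, eventually_cofinite, mem_Ioi, hexp, true_imp_iff]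
  exact ⟨fun h C hC => Real.exp_log hC ▸ h (Real.log C), fun h R => h _ (Real.exp_pos R)⟩

/-- The graph of a homomorphism `φ` from a discrete subgroup `Γ₀` of `SL₂(ℝ)` to `SL₂(ℝ)` along
which the operator norm decreases by an arbitrarily large factor outside finite sets. -/
def IsContractingGraph (S : Set (SL2R × SL2R)) : Prop :=
  ∃ (Γ₀ : Subgroup SL2R) (φ : Γ₀ →* SL2R), DiscreteTopology Γ₀ ∧
    S = {x : SL2R × SL2R | ∃ γ : Γ₀, x = ((γ : SL2R), φ γ)} ∧
    ∀ C : ℝ, 0 < C → {γ : Γ₀ | ¬ C * sl2OpNorm (φ γ) < sl2OpNorm (γ : SL2R)}.Finite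

theorem IsContractingGraph.tendsto_cartanProj_sub_atTop {ι : Type*} {a b : ι → SL2R}
    (hgraph : IsContractingGraph (range fun i => (a i, b i)))
    (hinj : Function.Injective fun i => (a i, b i)) :
    Tendsto (fun i => cartanProj (a i) - cartanProj (b i)) cofinite atTop := by
  obtain ⟨Γ₀, φ, -, hS, hφ⟩ := hgraph
  have hmem (i : ι) : ∃ γ : Γ₀, a i = γ ∧ b i = φ γ := by
    simpa only [mem_ofPred_eq, Prod.mk.injEq] using hS.subset (mem_range_self i)
  choose f ha hb using hmem
  have hf : Function.Injective f := fun i j hij => hinj (by simp only [ha, hb, hij])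
  refine (((tendsto_cartanProj_sub_atTop_iff _ _).2 hφ).comp hf.tendsto_cofinite).congr fun i => ?_
  rw [Function.comp_apply, ha, hb]

section Representation

variable {G : Type*} [Group G] {ρ₁ ρ₂ : G →* SL2R}

theorem isContractingGraph_range (htf : ∀ g : G, IsOfFinOrder g → g = 1)
    (h : Tendsto (fun g => cartanProj (ρ₁ g) - cartanProj (ρ₂ g)) cofinite atTop) :
    IsContractingGraph (range fun g => (ρ₁ g, ρ₂ g)) := by
  have hρ₁ : Tendsto (fun g => cartanProj (ρ₁ g)) cofinite atTop :=
    tendsto_atTop_mono (fun g => sub_le_self _ (apply_nonneg cartanProj (ρ₂ g))) h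
  let e : G ≃* ρ₁.range :=
    MonoidHom.ofInjective (injective_of_tendsto_comp_cofinite_atTop htf hρ₁)
  have he (γ : ρ₁.range) : ρ₁ (e.symm γ) = γ := congrArg Subtype.val (e.apply_symm_apply γ)
  have he_cofinite : Tendsto e.symm cofinite cofinite := e.symm.injective.tendsto_cofinite
  have : T1Space SL2R := isClosedEmbedding_coe.isEmbedding.t1Space
  refine ⟨ρ₁.range, ρ₂.comp e.symm, ?_, ?_, ?_⟩
  · exact discreteTopology_of_tendsto_cofinite_atTop
      (continuous_cartanProj.comp continuous_subtype_val)
      ((hρ₁.comp he_cofinite).congr fun γ => congrArg cartanProj (he γ))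
  · rw [← e.symm.surjective.range_comp]
    ext x
    simp only [mem_range, Function.comp_apply, he, mem_ofPred_eq, eq_comm (a := x)]
    rfl
  · exact (tendsto_cartanProj_sub_atTop_iff _ _).1 ((h.comp he_cofinite).congr fun γ =>
      congrArg (cartanProj · - cartanProj (ρ₂ (e.symm γ))) (he γ))

theorem tendsto_abs_cartanProj_sub_iff (htf : ∀ g : G, IsOfFinOrder g → g = 1)
    (hinj : Function.Injective fun g => (ρ₁ g, ρ₂ g)) :
    Tendsto (fun g => |cartanProj (ρ₁ g) - cartanProj (ρ₂ g)|) cofinite atTop ↔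
      IsContractingGraph (range fun g => (ρ₁ g, ρ₂ g)) ∨
        IsContractingGraph (range fun g => (ρ₂ g, ρ₁ g)) := by
  constructor
  · intro habs
    rcases subsingleton_or_nontrivial G with hG | hG
    · exact .inl (isContractingGraph_range htf (by simp only [cofinite_eq_bot, tendsto_bot]))
    · obtain ⟨d, hd⟩ := exists_ne (1 : G)
      exact (tendsto_sub_cofinite_atTop_or (p := cartanProj.comp ρ₁) (q := cartanProj.comp ρ₂)
        habs (mt (htf d) hd)).imp (isContractingGraph_range htf) (isContractingGraph_range htf)
  · rintro (h | h)
    · exact tendsto_abs_atTop_atTop.comp (h.tendsto_cartanProj_sub_atTop hinj)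
    · simpa only [Function.comp_def, abs_sub_comm] using
        tendsto_abs_atTop_atTop.comp
          (h.tendsto_cartanProj_sub_atTop (Prod.swap_injective.comp hinj))

end Representation

end SL2R

theorem stmt_0_general (Γ : Subgroup (SL2R × SL2R))
    (htorsionfree : ∀ g ∈ Γ, IsOfFinOrder g → g = 1) :
    (∀ K L : Set SL2R, IsCompact K → IsCompact L →
      {γ : Γ | ((fun g => (γ : SL2R × SL2R).1 * g * ((γ : SL2R × SL2R).2)⁻¹) '' K ∩
        L).Nonempty}.Finite) ↔
    ∃ doSwap : Bool, ∃ Γ₀ : Subgroup SL2R, ∃ φ : Γ₀ →* SL2R,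
      DiscreteTopology Γ₀ ∧
      (if doSwap then Prod.swap '' (Γ : Set (SL2R × SL2R)) else (Γ : Set (SL2R × SL2R))) =
        {x : SL2R × SL2R | ∃ γ : Γ₀, x = ((γ : SL2R), φ γ)} ∧
      ∀ C : ℝ, 0 < C →
        {γ : Γ₀ | ¬ C * sl2OpNorm (φ γ) < sl2OpNorm (γ : SL2R)}.Finite := by
  have htf (γ : Γ) (hγ : IsOfFinOrder γ) : γ = 1 :=
    Subtype.ext (htorsionfree γ γ.2 (Submonoid.isOfFinOrder_coe.2 hγ))
  have hgraph : (range fun γ : Γ => (γ.1.1, γ.1.2)) = Γ := Subtype.range_coe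
  have hgraph_swap : (range fun γ : Γ => (γ.1.2, γ.1.1)) =
      Prod.swap '' (Γ : Set (SL2R × SL2R)) := by
    rw [← hgraph, ← range_comp]
    rfl
  rw [SL2R.forall_isCompact_finite_iff_tendsto_abs_cartanProj_sub, Bool.exists_bool]
  refine (SL2R.tendsto_abs_cartanProj_sub_iff (ρ₁ := (MonoidHom.fst _ _).comp Γ.subtype)
    (ρ₂ := (MonoidHom.snd _ _).comp Γ.subtype) htf Subtype.val_injective).trans ?_
  exact or_congr (hgraph ▸ Iff.rfl) (hgraph_swap ▸ Iff.rfl)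

theorem stmt_0 (Γ : Subgroup (SL2R × SL2R))
    (hdiscrete : DiscreteTopology Γ)
    (htorsionfree : ∀ g ∈ Γ, IsOfFinOrder g → g = 1) :
    -- Γ acts properly discontinuously on SL₂(ℝ) by (γ₁,γ₂)·g = γ₁gγ₂⁻¹ :
    (∀ K L : Set SL2R, IsCompact K → IsCompact L →
      {γ : Γ | ((fun g => (γ : SL2R × SL2R).1 * g * ((γ : SL2R × SL2R).2)⁻¹) '' K ∩ L).Nonempty}.Finite)
    ↔
    -- iff, possibly after swapping the two factors, Γ is a graph:
    ∃ doSwap : Bool, ∃ Γ₀ : Subgroup SL2R, ∃ φ : Γ₀ →* SL2R,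
      DiscreteTopology Γ₀ ∧
      (if doSwap then Prod.swap '' (Γ : Set (SL2R × SL2R)) else (Γ : Set (SL2R × SL2R)))
        = {x : SL2R × SL2R | ∃ γ : Γ₀, x = ((γ : SL2R), φ γ)} ∧
      ∀ C : ℝ, 0 < C →
        {γ : Γ₀ | ¬ C * sl2OpNorm (φ γ) < sl2OpNorm (γ : SL2R)}.Finite :=
  stmt_0_general Γ htorsionfree
end

section
/- Let p be a prime, n ≥ 1 an integer, and K a finite field extension of ℚ_p (i.e., a field equipped with a ℚ_p-algebra structure making it finite-dimensional over ℚ_p). Then every torsion subgroup of GL_n(K) is finite. -/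
/-!
STATEMENT 13: let p be a prime, n ≥ 1, and K a finite field extension of ℚ_p.
Then every torsion subgroup of GL_n(K) is finite.
-/

/-!
Let `G` be a torsion group with a faithful representation of dimension `d` over `ℚ_p` and
character `χ`. The values of `χ` are sums of roots of unity, hence lie in `ℤ_p`. For a power `p ^ r`
let `N` be the subgroup of those `u` with `χ (u * x) ≡ χ x` modulo `p ^ r` for all `x`.

* `N` has finite index: `g` determines the functional `T ↦ tr (g T)` on the span of `G`, which is
  integral on `G`. Such functionals form a finitely generated `ℤ_p`-module `D`, and the coset of `g`
  depends only on the class of its functional in the finite group `D / p ^ r D`.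
* If `p * d < p ^ r`, then `N` has no element `u` of prime order `q`: with `c` the codimension of
  the fixed space of `u`, averaging `χ` over the powers of `u` shows that `p ^ r` divides `q * c`,
  hence `p * c`, which forces `c = 0`.

A torsion group without elements of prime order is trivial, so `N` is trivial and `G` is finite.
-/

open Module

section Traces

variable {K V : Type*} [Field K] [AddCommGroup V] [Module K V]

theorem isIntegral_of_hasEigenvalue {R : Type*} [CommRing R] [Algebra R K] [Module R V]
    [IsScalarTower R K V] {f : End K V} (hf : IsIntegral R f) {μ : K} (hμ : f.HasEigenvalue μ) :
    IsIntegral R μ := by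
  obtain ⟨P, hP, hPf⟩ := hf
  obtain ⟨v, hv⟩ := hμ.exists_hasEigenvector
  have hPf : Polynomial.aeval f (P.map (algebraMap R K)) = 0 := by
    rwa [Polynomial.aeval_map_algebraMap]
  have hPv := End.aeval_apply_of_hasEigenvector (p := P.map (algebraMap R K)) hv
  rw [hPf, LinearMap.zero_apply, eq_comm, smul_eq_zero_iff_left hv.2, Polynomial.eval_map] at hPv
  exact ⟨P, hP, hPv⟩

theorem isIntegral_trace_of_isOfFinOrder [FiniteDimensional K V] {f : End K V}
    (hf : IsOfFinOrder f) : IsIntegral ℤ (LinearMap.trace K V f) := by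
  let L := AlgebraicClosure K
  have hfL : IsIntegral ℤ (f.baseChange L) := by
    obtain ⟨m, hm, hfm⟩ := isOfFinOrder_iff_pow_eq_one.mp hf
    refine .of_pow hm ?_
    rw [← LinearMap.baseChange_pow, hfm, LinearMap.baseChange_one]
    exact isIntegral_one
  rw [← isIntegral_algebraMap_iff (algebraMap K L).injective, ← LinearMap.trace_baseChange,
    End.trace_eq_sum_roots_charpoly_of_splits (IsAlgClosed.splits _)]
  refine IsIntegral.multiset_sum fun μ hμ ↦ isIntegral_of_hasEigenvalue hfL ?_
  exact (End.hasEigenvalue_iff_isRoot_charpoly _ _).mpr (Polynomial.isRoot_of_mem_roots hμ)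

end Traces

section IntegralDual

variable (R K : Type*) {V ι : Type*} [CommRing R] [Field K] [Algebra R K] [AddCommGroup V]
  [Module K V]

/-- The `R`-module of linear functionals on the span of a family `v` that take values in (the image
of) `R` on the family, a functional being encoded by the values it takes there. When `v` spans a
lattice, this is the dual lattice. -/
def integralDual (v : ι → V) : Submodule R (ι → K) where
  carrier := {f | (∃ L : Dual K V, ∀ i, L (v i) = f i) ∧ ∀ i, f i ∈ (1 : Submodule R K)}
  zero_mem' := ⟨⟨0, fun _ ↦ rfl⟩, fun _ ↦ zero_mem _⟩
  add_mem' := by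
    rintro f f' ⟨⟨L, hL⟩, hf⟩ ⟨⟨L', hL'⟩, hf'⟩
    exact ⟨⟨L + L', fun i ↦ by simp [hL, hL']⟩, fun i ↦ add_mem (hf i) (hf' i)⟩
  smul_mem' := by
    rintro c f ⟨⟨L, hL⟩, hf⟩
    exact ⟨⟨algebraMap R K c • L, fun i ↦ by simp [hL, Algebra.smul_def]⟩,
      fun i ↦ Submodule.smul_mem _ c (hf i)⟩

variable {R K}

theorem eq_zero_of_mem_integralDual {κ : Type*} {v : ι → V} {a : κ → ι}
    (ha : Submodule.span K (Set.range (v ∘ a)) = Submodule.span K (Set.range v)) {f : ι → K}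
    (hf : f ∈ integralDual R K v) (hfa : ∀ j, f (a j) = 0) : f = 0 := by
  obtain ⟨⟨L, hL⟩, -⟩ := hf
  have hker : Submodule.span K (Set.range (v ∘ a)) ≤ LinearMap.ker L := by
    rw [Submodule.span_le]
    rintro _ ⟨j, rfl⟩
    exact (hL (a j)).trans (hfa j)
  funext i
  rw [← hL i]
  exact hker (ha ▸ Submodule.subset_span ⟨i, rfl⟩)

theorem finite_integralDual [IsNoetherianRing R] [FiniteDimensional K V] (v : ι → V) :
    Module.Finite R (integralDual R K v) := by
  obtain ⟨κ, a, -, ha, hli⟩ := exists_linearIndependent' K v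
  have := hli.finite
  let restrict : integralDual R K v →ₗ[R] κ → (1 : Submodule R K) :=
    LinearMap.pi fun j ↦ ((LinearMap.proj (a j)).comp (Submodule.subtype _)).codRestrict 1
      fun f ↦ f.2.2 (a j)
  have : Module.Finite R (1 : Submodule R K) := by
    rw [Submodule.one_eq_span]
    infer_instance
  refine .of_injective restrict ((injective_iff_map_eq_zero restrict).mpr fun f hf ↦ ?_)
  have hfa (j : κ) : f.1 (a j) = 0 := congrArg Subtype.val (congrFun hf j)
  exact Subtype.ext (eq_zero_of_mem_integralDual ha f.2 hfa)

theorem apply_mem_smul_one_of_mem_smul_top {I : Ideal R} {v : ι → V} {f : integralDual R K v}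
    (hf : f ∈ I • (⊤ : Submodule R (integralDual R K v))) (i : ι) :
    f.1 i ∈ I • (1 : Submodule R K) := by
  induction hf using Submodule.smul_induction_on' with
  | smul c hc f' _ => exact Submodule.smul_mem_smul hc (f'.2.2 i)
  | add f' _ f'' _ hf' hf'' => exact add_mem hf' hf''

end IntegralDual

section CharacterKernel

variable {R K G V : Type*} [CommRing R] [Field K] [Group G] [AddCommGroup V] [Module K V]

/-- The subgroup of those `u` for which translation by `u` does not change the character of `ρ`
modulo `A`. -/
def characterKernel [Module R K] (ρ : Representation K G V) (A : Submodule R K) : Subgroup G where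
  carrier := {u | ∀ x, ρ.character (u * x) - ρ.character x ∈ A}
  one_mem' x := by simp
  mul_mem' {u v} hu hv x := by
    simpa [mul_assoc] using add_mem (hu (v * x)) (hv x)
  inv_mem' {u} hu x := by
    simpa using neg_mem (hu (u⁻¹ * x))

variable {ρ : Representation K G V}

theorem character_sub_finrank_mem [Module R K] [FiniteDimensional K V] {A : Submodule R K} {u : G}
    (hu : u ∈ characterKernel ρ A) : ρ.character u - finrank K V ∈ A := by
  simpa using hu 1

theorem inv_mul_mem_characterKernel [Module R K] {A : Submodule R K} {g h : G}
    (hgh : ∀ x, ρ.character (h * x) - ρ.character (g * x) ∈ A) :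
    g⁻¹ * h ∈ characterKernel ρ A := by
  intro x
  have hh : ρ.character (h * (x * g⁻¹)) = ρ.character (g⁻¹ * h * x) := by
    rw [← mul_assoc, ρ.char_mul_comm, ← mul_assoc]
  have hg : ρ.character (g * (x * g⁻¹)) = ρ.character x := by
    rw [← mul_assoc, ρ.char_conj]
  simpa only [hh, hg] using hgh (x * g⁻¹)

theorem finiteIndex_characterKernel [FiniteDimensional K V] [IsNoetherianRing R] [Algebra R K]
    (hρ : ∀ g, ρ.character g ∈ (1 : Submodule R K))
    (I : Ideal R) [Finite (R ⧸ I)] :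
    (characterKernel ρ (I • (1 : Submodule R K))).FiniteIndex := by
  let D := integralDual R K ρ
  let translate (g : G) : D :=
    ⟨fun x ↦ ρ.character (g * x), ⟨LinearMap.trace K V ∘ₗ LinearMap.mulLeft K (ρ g), fun x ↦ by
      simp [Representation.character]⟩, fun x ↦ hρ (g * x)⟩
  have : Module.Finite R D := finite_integralDual _
  have : Finite (D ⧸ I • (⊤ : Submodule R D)) :=
    Submodule.finite_quotient_smul I Module.Finite.fg_top
  have hcongr {g h : G} (hgh : Submodule.mkQ (I • (⊤ : Submodule R D)) (translate g) =
      Submodule.mkQ _ (translate h)) (x : G) :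
      ρ.character (g * x) - ρ.character (h * x) ∈ I • (1 : Submodule R K) :=
    apply_mem_smul_one_of_mem_smul_top ((Submodule.Quotient.eq _).mp hgh) x
  refine Subgroup.finiteIndex_iff_finite_quotient.mpr <| .of_injective
    (fun q ↦ Submodule.mkQ (I • (⊤ : Submodule R D)) (translate q.out)) fun q q' hqq' ↦ ?_
  rw [← q.out_eq', ← q'.out_eq', QuotientGroup.eq]
  exact inv_mul_mem_characterKernel (hcongr hqq'.symm)

theorem card_mul_finrank_quotient_invariants_mem [Module R K] [Finite G] [CharZero K]
    [FiniteDimensional K V] {A : Submodule R K} (hA : ∀ g, ρ.character g - finrank K V ∈ A) :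
    ((Nat.card G * finrank K (V ⧸ ρ.invariants) : ℕ) : K) ∈ A := by
  have := Fintype.ofFinite G
  have hG : (Nat.card G : K) ≠ 0 := Nat.cast_ne_zero.mpr Nat.card_pos.ne'
  have := invertibleOfNonzero hG
  have hsum : ∑ g, ρ.character g = Nat.card G * finrank K ρ.invariants := by
    rw [← ρ.card_inv_mul_sum_char_eq_finrank, mul_inv_cancel_left₀ hG]
  have hdim : (finrank K V : K) = finrank K (V ⧸ ρ.invariants) + finrank K ρ.invariants := by
    exact_mod_cast (Submodule.finrank_quotient_add_finrank ρ.invariants).symm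
  have hcodim : ((Nat.card G * finrank K (V ⧸ ρ.invariants) : ℕ) : K) =
      -∑ g, (ρ.character g - finrank K V) := by
    rw [Finset.sum_sub_distrib, hsum, hdim]
    simp
  rw [hcodim]
  exact neg_mem (sum_mem fun g _ ↦ hA g)

end CharacterKernel

theorem exists_prime_orderOf_pow {G : Type*} [Monoid G] {g : G} (hg : IsOfFinOrder g)
    (hne : g ≠ 1) : ∃ k, (orderOf (g ^ k)).Prime := by
  obtain ⟨q, hq, hdvd⟩ := Nat.exists_prime_and_dvd (mt orderOf_eq_one_iff.mp hne)
  exact ⟨orderOf g / q, by rwa [orderOf_pow_orderOf_div hg.orderOf_pos.ne' hdvd]⟩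

theorem eq_zero_of_prime_pow_dvd_prime_mul {p q r c : ℕ} (hp : p.Prime) (hq : q.Prime)
    (hdvd : p ^ r ∣ q * c) (hlt : p * c < p ^ r) : c = 0 := by
  have hpc : p ^ r ∣ p * c := by
    rcases eq_or_ne p q with rfl | hpq
    · exact hdvd
    · exact (((Nat.coprime_primes hp hq).mpr hpq).pow_left r).dvd_of_dvd_mul_left hdvd
        |>.mul_left p
  exact (mul_eq_zero.mp (Nat.eq_zero_of_dvd_of_lt hpc hlt)).resolve_left hp.ne_zero

section Padic

variable {p : ℕ} [Fact p.Prime]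

theorem finite_quotient_span_p_pow (r : ℕ) :
    Finite (ℤ_[p] ⧸ Ideal.span {(p : ℤ_[p]) ^ r}) := by
  have : NeZero (p ^ r) := ⟨pow_ne_zero r (Fact.out : p.Prime).ne_zero⟩
  rw [← PadicInt.ker_toZModPow]
  exact .of_injective _ (RingHom.kerLift_injective (PadicInt.toZModPow r))

theorem natCast_mem_span_p_pow_smul_one_iff {r m : ℕ} :
    (m : ℚ_[p]) ∈ Ideal.span {(p : ℤ_[p]) ^ r} • (1 : Submodule ℤ_[p] ℚ_[p]) ↔ p ^ r ∣ m := by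
  have hdvd : p ^ r ∣ m ↔ (p : ℤ_[p]) ^ r ∣ m := by
    exact_mod_cast (PadicInt.pow_p_dvd_int_iff r m).symm
  rw [hdvd, Submodule.ideal_span_singleton_smul, Submodule.mem_smul_pointwise_iff_exists]
  constructor
  · rintro ⟨_, hx, hm⟩
    obtain ⟨c, rfl⟩ := Submodule.mem_one.mp hx
    refine ⟨c, PadicInt.ext ?_⟩
    simpa [Algebra.smul_def] using hm.symm
  · rintro ⟨c, hc⟩
    refine ⟨c, Submodule.mem_one.mpr ⟨c, rfl⟩, ?_⟩
    simpa [Algebra.smul_def] using (congrArg (algebraMap ℤ_[p] ℚ_[p]) hc).symm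

variable {G V : Type*} [Group G] [AddCommGroup V] [Module ℚ_[p] V] [FiniteDimensional ℚ_[p] V]

theorem character_mem_one_of_isOfFinOrder (ρ : Representation ℚ_[p] G V) {g : G}
    (hg : IsOfFinOrder g) : ρ.character g ∈ (1 : Submodule ℤ_[p] ℚ_[p]) :=
  Submodule.mem_one.mpr <| IsIntegrallyClosed.isIntegral_iff.mp <| .tower_top <|
    isIntegral_trace_of_isOfFinOrder (ρ.isOfFinOrder hg)

theorem apply_eq_one_of_mem_characterKernel {ρ : Representation ℚ_[p] G V} {r : ℕ}
    (hr : p * finrank ℚ_[p] V < p ^ r) {w : G} (hw : (orderOf w).Prime)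
    (hmem : w ∈ characterKernel ρ
      (Ideal.span {(p : ℤ_[p]) ^ r} • (1 : Submodule ℤ_[p] ℚ_[p]))) : ρ w = 1 := by
  let σ : Representation ℚ_[p] (Subgroup.zpowers w) V := ρ.comp (Subgroup.zpowers w).subtype
  have : Finite (Subgroup.zpowers w) := Nat.finite_of_card_ne_zero (by simpa using hw.ne_zero)
  have hdvd : p ^ r ∣ orderOf w * finrank ℚ_[p] (V ⧸ σ.invariants) := by
    rw [← natCast_mem_span_p_pow_smul_one_iff, ← Nat.card_zpowers]
    exact card_mul_finrank_quotient_invariants_mem fun g ↦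
      character_sub_finrank_mem (ρ := ρ) (Subgroup.zpowers_le.mpr hmem g.2)
  have hcodim : finrank ℚ_[p] (V ⧸ σ.invariants) = 0 :=
    eq_zero_of_prime_pow_dvd_prime_mul Fact.out hw hdvd <|
      (Nat.mul_le_mul_left p (Submodule.finrank_quotient_le _)).trans_lt hr
  have htop : σ.invariants = ⊤ :=
    Submodule.Quotient.subsingleton_iff.mp (finrank_zero_iff.mp hcodim)
  ext v
  exact σ.mem_invariants v |>.mp (htop ▸ Submodule.mem_top) ⟨w, Subgroup.mem_zpowers w⟩

theorem finite_of_isMulTorsion_of_injective (hG : IsMulTorsion G)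
    {ρ : Representation ℚ_[p] G V} (hρ : Function.Injective ρ) : Finite G := by
  obtain ⟨r, hr⟩ := pow_unbounded_of_one_lt (p * finrank ℚ_[p] V) (Fact.out : p.Prime).one_lt
  have := finite_quotient_span_p_pow (p := p) r
  let N := characterKernel ρ (Ideal.span {(p : ℤ_[p]) ^ r} • (1 : Submodule ℤ_[p] ℚ_[p]))
  have hindex : N.FiniteIndex :=
    finiteIndex_characterKernel (fun g ↦ character_mem_one_of_isOfFinOrder ρ (hG g)) _
  have hbot : N = ⊥ := by
    refine (Subgroup.eq_bot_iff_forall _).mpr fun u hu ↦ by_contra fun hne ↦ ?_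
    obtain ⟨k, hk⟩ := exists_prime_orderOf_pow (hG u) hne
    have hone := apply_eq_one_of_mem_characterKernel hr hk (N.pow_mem hu k)
    refine hk.ne_one (orderOf_eq_one_iff.mpr (hρ ?_))
    rw [hone, map_one]
  exact (Subgroup.finite_iff_finite_and_finiteIndex N).mpr ⟨hbot ▸ inferInstance, hindex⟩

end Padic

theorem stmt_13_general (p : ℕ) [Fact p.Prime] {E : Type*} [Ring E] [Algebra ℚ_[p] E]
    [FiniteDimensional ℚ_[p] E] (Γ : Subgroup Eˣ) (htorsion : ∀ g ∈ Γ, IsOfFinOrder g) :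
    (Γ : Set Eˣ).Finite := by
  let ρ : Representation ℚ_[p] Γ E :=
    (Algebra.lmul ℚ_[p] E : E →* End ℚ_[p] E).comp ((Units.coeHom E).comp Γ.subtype)
  have hρ : Function.Injective ρ :=
    Algebra.lmul_injective.comp (Units.val_injective.comp Subtype.val_injective)
  have hΓ : IsMulTorsion Γ := fun g ↦ Submonoid.isOfFinOrder_coe.mp (htorsion g g.2)
  exact finite_of_isMulTorsion_of_injective hΓ hρ

theorem stmt_13 (p : ℕ) [Fact p.Prime] (n : ℕ) (hn : 1 ≤ n)
    (K : Type*) [Field K] [Algebra ℚ_[p] K] [FiniteDimensional ℚ_[p] K]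
    (Γ : Subgroup (GL (Fin n) K))
    (htorsion : ∀ g ∈ Γ, IsOfFinOrder g) :
    (Γ : Set (GL (Fin n) K)).Finite :=
  stmt_13_general p Γ htorsion
end

section
/- For every n ≥ 1, every discrete torsion subgroup of GL_n(ℂ) is finite. -/
/-!
A finitely generated torsion subgroup of `GL n R`, for a domain `R` of characteristic zero, is
finite (Burnside–Schur): its matrix entries lie in a finitely generated `ℤ`-algebra, and such an
algebra has finite residue fields of two distinct characteristics `p ≠ p'`. A torsion element that
reduces to `1` in both must have order both a power of `p` and a power of `p'`, so the group embeds
into a product of two finite groups.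

A torsion subgroup `Γ` of `GL n 𝕜`, with `𝕜 = ℝ` or `ℂ`, is then conjugate into the unitary group.
Every finitely generated subgroup of `Γ` is finite, hence preserves a positive definite form, and
as the space of all forms has finite dimension, some finitely generated subgroup of `Γ` preserves
only forms that the whole of `Γ` preserves. Thus `Γ` lies in a compact group, and when discrete it
is finite.
-/

section FiniteTypeInt

theorem isJacobsonRing_int : IsJacobsonRing ℤ := by
  rw [isJacobsonRing_iff_prime_eq]
  intro P hP
  by_cases hbot : P = ⊥
  · subst hbot
    refine le_antisymm (fun x hx ↦ ?_) Ideal.le_jacobson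
    have hunit : IsUnit (x * x + 1) := Ideal.mem_jacobson_bot.1 hx x
    have hsq : x * x = 0 := by
      have := mul_self_nonneg x
      rcases Int.isUnit_iff.1 hunit with h | h <;> linarith
    exact mul_self_eq_zero.1 hsq
  · have := hP.isMaximal hbot
    exact Ideal.jacobson_eq_self_of_isMaximal

theorem finite_of_finiteType_int (K : Type*) [Field K] [hK : Algebra.FiniteType ℤ K] :
    Finite K := by
  have := isJacobsonRing_int
  have : Module.Finite ℤ K := finite_of_finite_type_of_isJacobsonRing ℤ K
  obtain ⟨p, hp⟩ := CharP.exists K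
  have hp0 : p ≠ 0 := by
    rintro rfl
    have : CharZero K := CharP.charP_to_charZero K
    exact Int.not_isField <|
      isField_of_isIntegral_of_isField (algebraMap ℤ K).injective_int (Field.toIsField K)
  refine Module.finite_of_fg_torsion K fun x ↦
    ⟨⟨p, mem_nonZeroDivisors_of_ne_zero (Nat.cast_ne_zero.2 hp0)⟩, ?_⟩
  change (p : ℤ) • x = 0
  rw [zsmul_eq_mul, Int.cast_natCast, CharP.cast_eq_zero, zero_mul]

theorem exists_isMaximal_notMem {R : Type*} [CommRing R] [IsJacobsonRing R] {a : R}
    (ha : ¬IsNilpotent a) : ∃ I : Ideal R, I.IsMaximal ∧ a ∉ I := by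
  by_contra! h
  have hrad : a ∈ (⊥ : Ideal R).radical := by
    rw [Ideal.radical_eq_jacobson]
    exact Ideal.mem_sInf.2 fun I hI ↦ h _ hI.2
  exact ha hrad

variable (R : Type*) [CommRing R] [Algebra.FiniteType ℤ R]

theorem finite_quotient_of_finiteType_int (I : Ideal R) [I.IsMaximal] : Finite (R ⧸ I) := by
  let := Ideal.Quotient.field I
  have hquot : Algebra.FiniteType ℤ (R ⧸ I) :=
    .of_surjective (Ideal.Quotient.mkₐ ℤ I) Ideal.Quotient.mk_surjective
  exact finite_of_finiteType_int (R ⧸ I) (hK := hquot)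

theorem exists_isMaximal_ringChar_ne [IsDomain R] [CharZero R] :
    ∃ I J : Ideal R, I.IsMaximal ∧ J.IsMaximal ∧ ringChar (R ⧸ I) ≠ ringChar (R ⧸ J) := by
  obtain ⟨I, hI⟩ := Ideal.exists_maximal R
  have := finite_quotient_of_finiteType_int R I
  have := isJacobsonRing_int
  have : IsJacobsonRing R := isJacobsonRing_of_finiteType (A := ℤ)
  have hp : (ringChar (R ⧸ I) : R) ≠ 0 :=
    Nat.cast_ne_zero.2 (CharP.ringChar_ne_zero_of_finite (R ⧸ I))
  obtain ⟨J, hJ, hpJ⟩ := exists_isMaximal_notMem (mt IsNilpotent.eq_zero hp)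
  refine ⟨I, J, hI, hJ, fun h ↦ hpJ ?_⟩
  rw [← Ideal.Quotient.eq_zero_iff_mem, h, map_natCast, CharP.cast_eq_zero]

end FiniteTypeInt

open Matrix

section Reduction

variable {n R S S' : Type*} [Fintype n] [DecidableEq n] [CommRing R] [IsDomain R]
  [CommRing S] [IsReduced S] [CommRing S'] [IsReduced S']

theorem eq_one_of_mapMatrix_eq_one_of_pow_eq_one (f : R →+* S) {A : Matrix n n R} {q : ℕ}
    (hpow : A ^ q = 1) (hmap : f.mapMatrix A = 1) (hq : (q : S) ≠ 0) : A = 1 := by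
  -- `A - 1` is annihilated by a matrix that `f` reduces to the scalar `q`.
  set D := ∑ i ∈ Finset.range q, A ^ i
  have hmul : (A - 1) * D = 0 * D := by rw [mul_geom_sum, hpow, sub_self, zero_mul]
  have hfD : f.mapMatrix D = q := by
    simp only [D, map_sum, map_pow, hmap, one_pow, Finset.sum_const, Finset.card_range,
      nsmul_eq_mul, mul_one]
  have hdet : f D.det = (q : S) ^ Fintype.card n := by
    rw [f.map_det, hfD, ← diagonal_natCast, det_diagonal, Finset.prod_const, Finset.card_univ]
  have hdet0 : D.det ≠ 0 := fun h ↦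
    hq (IsReduced.eq_zero _ ⟨_, by rw [← hdet, h, map_zero]⟩)
  have hD : IsRegular D := isRegular_of_isLeftRegular_det (IsRegular.of_ne_zero hdet0).left
  exact sub_eq_zero.1 (hD.right hmul)

theorem natCast_eq_zero_of_prime_dvd_orderOf (f : R →+* S) {g : GL n R} (hg : IsOfFinOrder g)
    (hmap : GeneralLinearGroup.map f g = 1) {q : ℕ} (hq : q.Prime) (hdvd : q ∣ orderOf g) :
    (q : S) = 0 := by
  by_contra hq0
  set k := g ^ (orderOf g / q)
  have hk : orderOf k = q := orderOf_pow_orderOf_div hg.orderOf_pos.ne' hdvd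
  have hkpow : (k : Matrix n n R) ^ q = 1 := by
    rw [← Units.val_pow_eq_pow_val, ← hk, pow_orderOf_eq_one, Units.val_one]
  have hkmap : GeneralLinearGroup.map f k = 1 := by rw [map_pow, hmap, one_pow]
  have hk1 : k = 1 := Units.val_eq_one.1 <|
    eq_one_of_mapMatrix_eq_one_of_pow_eq_one f hkpow (congrArg Units.val hkmap) hq0
  rw [hk1, orderOf_one] at hk
  exact hq.one_lt.ne hk

theorem eq_one_of_map_eq_one_of_ringChar_ne [Nontrivial S] [Nontrivial S'] (f : R →+* S)
    (f' : R →+* S') (hchar : ringChar S ≠ ringChar S') {g : GL n R} (hg : IsOfFinOrder g)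
    (hf : GeneralLinearGroup.map f g = 1) (hf' : GeneralLinearGroup.map f' g = 1) : g = 1 := by
  by_contra hne
  obtain ⟨q, hq, hdvd⟩ := Nat.exists_prime_and_dvd (mt orderOf_eq_one_iff.1 hne)
  apply hchar
  rw [CharP.ringChar_of_prime_eq_zero hq (natCast_eq_zero_of_prime_dvd_orderOf f hg hf hq hdvd),
    CharP.ringChar_of_prime_eq_zero hq (natCast_eq_zero_of_prime_dvd_orderOf f' hg hf' hq hdvd)]

end Reduction

section BurnsideSchur

theorem mem_range_generalLinearGroup_map {n R S : Type*} [Fintype n] [DecidableEq n] [CommRing R]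
    [CommRing S] {f : R →+* S} (hf : Function.Injective f) {g : GL n S}
    (hg : ∀ i j, g i j ∈ f.range) (hginv : ∀ i j, g⁻¹ i j ∈ f.range) :
    g ∈ (GeneralLinearGroup.map (n := n) f).range := by
  choose A hA using hg
  choose B hB using hginv
  have hinj : Function.Injective (f.mapMatrix (m := n)) := map_injective hf
  have hA' : f.mapMatrix (of A) = g := ext hA
  have hB' : f.mapMatrix (of B) = (g⁻¹ : GL n S) := ext hB
  refine ⟨⟨of A, of B, hinj ?_, hinj ?_⟩, Units.ext hA'⟩
  · rw [map_mul, map_one, hA', hB', Units.mul_inv]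
  · rw [map_mul, map_one, hA', hB', Units.inv_mul]

theorem exists_finiteType_int_le_range_map {n R : Type*} [Fintype n] [DecidableEq n] [CommRing R]
    {H : Subgroup (GL n R)} (hfg : H.FG) :
    ∃ S : Subalgebra ℤ R, Algebra.FiniteType ℤ S ∧
      H ≤ (GeneralLinearGroup.map (n := n) (S.val : S →+* R)).range := by
  obtain ⟨t, rfl, htfin⟩ := (Subgroup.fg_iff _).1 hfg
  let entries : Set R :=
    ⋃ g ∈ t, Set.range (Function.uncurry g.1) ∪ Set.range (Function.uncurry g⁻¹.1)
  have hentries : entries.Finite :=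
    htfin.biUnion fun g _ ↦ (Set.finite_range _).union (Set.finite_range _)
  refine ⟨Algebra.adjoin ℤ entries, .adjoin_of_finite hentries, ?_⟩
  rw [Subgroup.closure_le]
  intro g hg
  refine mem_range_generalLinearGroup_map Subtype.val_injective
    (fun i j ↦ ⟨⟨g i j, Algebra.subset_adjoin ?_⟩, rfl⟩)
    fun i j ↦ ⟨⟨g⁻¹ i j, Algebra.subset_adjoin ?_⟩, rfl⟩
  · exact Set.mem_biUnion hg (.inl ⟨(i, j), rfl⟩)
  · exact Set.mem_biUnion hg (.inr ⟨(i, j), rfl⟩)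

variable {n R : Type*} [Fintype n] [DecidableEq n] [CommRing R] [IsDomain R] [CharZero R]

theorem finite_of_torsion_of_finiteType_int [Algebra.FiniteType ℤ R] {H : Subgroup (GL n R)}
    (htor : ∀ g ∈ H, IsOfFinOrder g) : Finite H := by
  obtain ⟨I, J, hI, hJ, hchar⟩ := exists_isMaximal_ringChar_ne R
  have := finite_quotient_of_finiteType_int R I
  have := finite_quotient_of_finiteType_int R J
  let φ := (GeneralLinearGroup.map (n := n) (Ideal.Quotient.mk I)).prod
    (GeneralLinearGroup.map (Ideal.Quotient.mk J))
  refine Finite.of_injective (φ.comp H.subtype) ((injective_iff_map_eq_one _).2 fun g hφ ↦ ?_)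
  exact Subtype.ext <| eq_one_of_map_eq_one_of_ringChar_ne _ _ hchar (htor g g.2)
    (congrArg Prod.fst hφ) (congrArg Prod.snd hφ)

theorem finite_of_fg_of_torsion {H : Subgroup (GL n R)} (hfg : H.FG)
    (htor : ∀ g ∈ H, IsOfFinOrder g) : Finite H := by
  obtain ⟨S, hS, hrange⟩ := exists_finiteType_int_le_range_map hfg
  let ι : S →+* R := S.val
  have : CharZero S := ι.charZero
  let φ := GeneralLinearGroup.map (n := n) ι
  have hφ : Function.Injective φ := Units.map_injective (map_injective Subtype.val_injective)
  have : Finite (H.comap φ) :=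
    finite_of_torsion_of_finiteType_int fun g hg ↦ hφ.isOfFinOrder_iff.1 (htor _ hg)
  rw [← Subgroup.map_comap_eq_self hrange]
  exact Set.Finite.image φ (Set.toFinite (H.comap φ : Set (GL n S)))

end BurnsideSchur

section InvariantForms

variable {n R : Type*} [Fintype n] [CommRing R] [StarRing R]

/-- The sesquilinear forms on `n → R` preserved by the matrix `A`, a form being encoded by its Gram
matrix `P`, as in `(x, y) ↦ star x ⬝ᵥ P *ᵥ y`. No symmetry is required, which makes this a
submodule over `R` and not only over the self-adjoint scalars. -/
def invariantForms (A : Matrix n n R) : Submodule R (Matrix n n R) :=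
  LinearMap.eqLocus (LinearMap.mulLeft R Aᴴ ∘ₗ LinearMap.mulRight R A) LinearMap.id

theorem mem_invariantForms {A P : Matrix n n R} : P ∈ invariantForms A ↔ Aᴴ * P * A = P := by
  simp [invariantForms, mul_assoc]

end InvariantForms

theorem exists_finset_biInf_eq {ι α : Type*} [CompleteLattice α] [WellFoundedLT α] (f : ι → α)
    (s : Set ι) : ∃ t : Finset ι, ↑t ⊆ s ∧ ⨅ i ∈ t, f i = ⨅ i ∈ s, f i := by
  classical
  obtain ⟨t, hts, hmin⟩ := exists_minimalFor_of_wellFoundedLT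
    (fun t : Finset ι ↦ ↑t ⊆ s) (fun t ↦ ⨅ i ∈ t, f i) ⟨∅, by simp⟩
  refine ⟨t, hts, le_antisymm (le_iInf₂ fun i hi ↦ ?_) (biInf_mono hts)⟩
  have hinsert : ⨅ j ∈ insert i t, f j ≤ ⨅ j ∈ t, f j :=
    biInf_mono fun j hj ↦ Finset.mem_insert_of_mem hj
  calc ⨅ j ∈ t, f j ≤ ⨅ j ∈ insert i t, f j :=
        hmin (by simpa [Set.insert_subset_iff] using ⟨hi, hts⟩) hinsert
    _ ≤ f i := biInf_le f (Finset.mem_insert_self i t)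

section Unitarization

variable {n 𝕜 : Type*} [Fintype n] [DecidableEq n] [RCLike 𝕜]

open scoped ComplexOrder MatrixOrder

theorem exists_posDef_mem_invariantForms_of_finite (H : Subgroup (GL n 𝕜)) [Finite H] :
    ∃ P : Matrix n n 𝕜, P.PosDef ∧ ∀ h ∈ H, P ∈ invariantForms h.1 := by
  have := Fintype.ofFinite H
  refine ⟨∑ g : H, g.1.1ᴴ * g.1.1, ?_, fun h hh ↦ ?_⟩
  · exact posDef_sum Finset.univ_nonempty fun g _ ↦
      .conjTranspose_mul_self _ (mulVec_injective_of_isUnit g.1.isUnit)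
  · rw [mem_invariantForms, Finset.mul_sum, Finset.sum_mul]
    refine Fintype.sum_equiv (Equiv.mulRight ⟨h, hh⟩) _ _ fun g ↦ ?_
    simp [mul_assoc]

theorem exists_posDef_mem_invariantForms_of_torsion {Γ : Subgroup (GL n 𝕜)}
    (htor : ∀ g ∈ Γ, IsOfFinOrder g) :
    ∃ P : Matrix n n 𝕜, P.PosDef ∧ ∀ g ∈ Γ, P ∈ invariantForms g.1 := by
  obtain ⟨t, htΓ, hforms⟩ :=
    exists_finset_biInf_eq (fun g : GL n 𝕜 ↦ invariantForms g.1) (Γ : Set (GL n 𝕜))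
  set H := Subgroup.closure (t : Set (GL n 𝕜))
  have hHΓ : H ≤ Γ := (Subgroup.closure_le Γ).2 htΓ
  have : Finite H := finite_of_fg_of_torsion ⟨t, rfl⟩ fun h hh ↦ htor h (hHΓ hh)
  obtain ⟨P, hP, hinv⟩ := exists_posDef_mem_invariantForms_of_finite H
  have hPt : P ∈ ⨅ g ∈ t, invariantForms g.1 := by
    simp only [Submodule.mem_iInf]
    exact fun g hg ↦ hinv g (Subgroup.subset_closure hg)
  rw [hforms] at hPt
  simp only [Submodule.mem_iInf] at hPt
  exact ⟨P, hP, hPt⟩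

theorem exists_conj_mem_unitaryGroup_of_posDef {P : Matrix n n 𝕜} (hP : P.PosDef) :
    ∃ B : GL n 𝕜, ∀ g : GL n 𝕜, P ∈ invariantForms g.1 →
      (B * g * B⁻¹).1 ∈ unitaryGroup n 𝕜 := by
  obtain ⟨_, ⟨B, rfl⟩, rfl⟩ :=
    CStarAlgebra.isStrictlyPositive_iff_eq_star_mul_self.1 hP.isStrictlyPositive
  refine ⟨B, fun g hg ↦ ?_⟩
  rw [mem_invariantForms, ← star_eq_conjTranspose] at hg
  rw [mem_unitaryGroup_iff']
  calc star (B * g * B⁻¹).1 * (B * g * B⁻¹).1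
      = star (B⁻¹).1 * (star g.1 * (star B.1 * B.1) * g.1) * (B⁻¹).1 := by
        simp only [Units.val_mul, star_mul, mul_assoc]
    _ = star (B.1 * (B⁻¹).1) * (B.1 * (B⁻¹).1) := by
        rw [hg]; simp only [star_mul, mul_assoc]
    _ = 1 := by rw [Units.mul_inv, star_one, one_mul]

theorem exists_conj_le_unitaryGroup_of_torsion {Γ : Subgroup (GL n 𝕜)}
    (htor : ∀ g ∈ Γ, IsOfFinOrder g) :
    ∃ B : GL n 𝕜, Γ ≤ (unitaryGroup n 𝕜).units.comap (MulAut.conj B).toMonoidHom := by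
  obtain ⟨P, hP, hinv⟩ := exists_posDef_mem_invariantForms_of_torsion htor
  obtain ⟨B, hB⟩ := exists_conj_mem_unitaryGroup_of_posDef hP
  refine ⟨B, fun g hg ↦ ⟨hB g (hinv g hg), ?_⟩⟩
  simpa [mul_assoc] using hB g⁻¹ (hinv g⁻¹ (inv_mem hg))

theorem isCompact_unitaryGroup : IsCompact (unitaryGroup n 𝕜 : Set (Matrix n n 𝕜)) := by
  have hentries : IsCompact
      (Set.univ.pi fun _ ↦ Set.univ.pi fun _ ↦ Metric.closedBall 0 1 : Set (n → n → 𝕜)) :=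
    isCompact_univ_pi fun _ ↦ isCompact_univ_pi fun _ ↦ isCompact_closedBall 0 1
  have hclosed : IsClosed (unitaryGroup n 𝕜 : Set (Matrix n n 𝕜)) := isClosed_unitary
  exact hentries.of_isClosed_subset hclosed fun U hU i _ j _ ↦
    mem_closedBall_zero_iff.2 (entry_norm_bound_of_unitary hU i j)

end Unitarization

theorem finite_of_discrete_of_subset_isCompact {G : Type*} [Group G] [TopologicalSpace G]
    [IsTopologicalGroup G] [T2Space G] (H : Subgroup G) [hH : DiscreteTopology H] {K : Set G}
    (hK : IsCompact K) (hHK : (H : Set G) ⊆ K) : (H : Set G).Finite :=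
  (hK.of_isClosed_subset Subgroup.isClosed_of_discrete hHK).finite ⟨hH⟩

theorem stmt_14_general {n 𝕜 : Type*} [Fintype n] [DecidableEq n] [RCLike 𝕜]
    (Γ : Subgroup (GL n 𝕜)) [DiscreteTopology Γ] (htor : ∀ g ∈ Γ, IsOfFinOrder g) :
    (Γ : Set (GL n 𝕜)).Finite := by
  obtain ⟨B, hB⟩ := exists_conj_le_unitaryGroup_of_torsion htor
  have hcompact : IsCompact
      ((unitaryGroup n 𝕜).units.comap (MulAut.conj B).toMonoidHom : Set (GL n 𝕜)) :=
    ((Homeomorph.mulLeft B).trans (Homeomorph.mulRight B⁻¹)).isCompact_preimage.2 <|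
      Submonoid.units_isCompact isCompact_unitaryGroup
  exact finite_of_discrete_of_subset_isCompact Γ hcompact hB

/-!
STATEMENT 14: for n ≥ 1, every discrete torsion subgroup of GL_n(ℂ) is finite.
Discreteness is expressed by saying that the image of Γ in the space of n×n
complex matrices is a discrete subset (for the subspace topology).
-/

theorem stmt_14 (n : ℕ) (hn : 1 ≤ n)
    (Γ : Subgroup (GL (Fin n) ℂ))
    -- Γ is discrete as a subset of the n×n complex matrices:
    (hdiscrete : DiscreteTopology
      ((fun g : GL (Fin n) ℂ => (g : Matrix (Fin n) (Fin n) ℂ)) '' (Γ : Set (GL (Fin n) ℂ))))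
    -- Γ is a torsion group:
    (htorsion : ∀ g ∈ Γ, IsOfFinOrder g) :
    (Γ : Set (GL (Fin n) ℂ)).Finite := by
  have : DiscreteTopology Γ :=
    .of_subset (.preimage_of_continuous_injective _ Units.continuous_val Units.val_injective)
      (Set.subset_preimage_image _ _)
  exact stmt_14_general Γ htorsion
end
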